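/- The sequence of real numbers p_ℙ(n)/M(n) tends to 0 as n tends to infinity. -/

import Mathlib

/-- The product, with multiplicity, of the factorials of the elements of a multiset. -/
def factorialProd (A : Multiset ℕ) : ℕ := (A.map Nat.factorial).prod

/-- `M n`: the number of distinct multinomial coefficients with upper entry `n`, i.e. the
number of distinct values of `∏_{j ∈ λ} j!` as `λ` ranges over the partitions of `n`. -/
noncomputable def M (n : ℕ) : ℕ :=
  Set.ncard {v : ℕ | ∃ P : Nat.Partition n, factorialProd P.parts = v}

/-- `pP n`: the number of partitions of `n` all of whose parts are prime. -/
noncomputable def pP (n : ℕ) : ℕ :=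
  Set.ncard {P : Nat.Partition n | ∀ j ∈ P.parts, Nat.Prime j}

lemma fp_cons (a : ℕ) (s : Multiset ℕ) :
    factorialProd (a ::ₘ s) = a.factorial * factorialProd s := by
  simp [factorialProd]

lemma fp_prime_dvd {q : ℕ} (hq : q.Prime) (s : Multiset ℕ) (h : q ∣ factorialProd s) :
    ∃ j ∈ s, q ≤ j := by
  induction s using Multiset.induction_on with
  | empty => simp [factorialProd] at h; exact absurd h hq.one_lt.ne'
  | cons a s ih =>
    rw [fp_cons, hq.dvd_mul] at h
    rcases h with h | h
    · exact ⟨a, by simp, (hq.dvd_factorial).1 h⟩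
    · obtain ⟨j, hj, hh⟩ := ih h
      exact ⟨j, by simp [hj], hh⟩

lemma dvd_fp {q : ℕ} (hq : q.Prime) {s : Multiset ℕ} (h : q ∈ s) : q ∣ factorialProd s := by
  obtain ⟨t, rfl⟩ := Multiset.exists_cons_of_mem h
  rw [fp_cons]
  exact Dvd.dvd.mul_right (hq.dvd_factorial.2 le_rfl) _

lemma exists_max (s : Multiset ℕ) (h : s ≠ 0) : ∃ a ∈ s, ∀ b ∈ s, b ≤ a := by
  obtain ⟨x, hx⟩ := Multiset.exists_mem_of_ne_zero h
  obtain ⟨a, ha, hb⟩ := s.toFinset.exists_max_image id ⟨x, by simpa using hx⟩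
  exact ⟨a, by simpa using ha, fun b h => hb b (by simpa using h)⟩

lemma fp_inj (s : Multiset ℕ) : ∀ t : Multiset ℕ, (∀ j ∈ s, j.Prime) → (∀ j ∈ t, j.Prime) →
    factorialProd s = factorialProd t → s = t := by
  induction hn : s.card generalizing s with
  | zero =>
    intro t hs ht h
    rw [Multiset.card_eq_zero] at hn
    subst hn
    by_contra hne
    obtain ⟨x, hx⟩ := Multiset.exists_mem_of_ne_zero (Ne.symm hne)
    have := dvd_fp (ht x hx) hx
    rw [← h] at this
    obtain ⟨j, hj, _⟩ := fp_prime_dvd (ht x hx) _ this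
    simp at hj
  | succ k ih =>
    intro t hs ht h
    have hs0 : s ≠ 0 := by rintro rfl; simp at hn
    obtain ⟨a, ha, hamax⟩ := exists_max s hs0
    have h1 := dvd_fp (hs a ha) ha
    rw [h] at h1
    obtain ⟨j, hj, haj⟩ := fp_prime_dvd (hs a ha) _ h1
    have h2 := dvd_fp (ht j hj) hj
    rw [← h] at h2
    obtain ⟨i, hi, hji⟩ := fp_prime_dvd (ht j hj) _ h2
    have := hamax i hi
    have hja : j = a := by omega
    subst hja
    obtain ⟨s', rfl⟩ := Multiset.exists_cons_of_mem ha
    obtain ⟨t', rfl⟩ := Multiset.exists_cons_of_mem hj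
    rw [fp_cons, fp_cons] at h
    have h3 := Nat.eq_of_mul_eq_mul_left (Nat.factorial_pos j) h
    rw [ih s' (by simpa using hn) t' (fun x hx => hs x (by simp [hx]))
      (fun x hx => ht x (by simp [hx])) h3]

/-- multisets of primes with sum at most `n` -/
def TT (n : ℕ) : Set (Multiset ℕ) := {s | (∀ j ∈ s, j.Prime) ∧ s.sum ≤ n}

/-- multisets of primes with sum `n` -/
def EE (n : ℕ) : Set (Multiset ℕ) := {s | (∀ j ∈ s, j.Prime) ∧ s.sum = n}

lemma valset_finite (n : ℕ) :
    {v : ℕ | ∃ P : Nat.Partition n, factorialProd P.parts = v}.Finite :=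
  Set.finite_range (fun P : Nat.Partition n => factorialProd P.parts)

lemma TT_maps (n : ℕ) : Set.MapsTo factorialProd (TT n)
    {v : ℕ | ∃ P : Nat.Partition n, factorialProd P.parts = v} := by
  rintro s ⟨hs, hn⟩
  refine ⟨⟨s + Multiset.replicate (n - s.sum) 1, ?_, ?_⟩, ?_⟩
  · intro i hi
    rw [Multiset.mem_add] at hi
    rcases hi with hi | hi
    · exact (hs i hi).pos
    · rw [Multiset.eq_of_mem_replicate hi]; exact one_pos
  · simp; omega
  · simp [factorialProd]

lemma TT_injOn (n : ℕ) : Set.InjOn factorialProd (TT n) :=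
  fun s hs t ht h => fp_inj s t hs.1 ht.1 h

lemma TT_finite (n : ℕ) : (TT n).Finite :=
  Set.Finite.of_injOn (TT_maps n) (TT_injOn n) (valset_finite n)

lemma TT_le_M (n : ℕ) : (TT n).ncard ≤ M n :=
  Set.ncard_le_ncard_of_injOn factorialProd (TT_maps n) (TT_injOn n) (valset_finite n)

lemma EE_sub (n : ℕ) : EE n ⊆ TT n := fun _ h => ⟨h.1, h.2.le⟩

lemma EE_finite (n : ℕ) : (EE n).Finite := (TT_finite n).subset (EE_sub n)

lemma pP_le (n : ℕ) : pP n ≤ (EE n).ncard := by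
  refine Set.ncard_le_ncard_of_injOn (fun P : Nat.Partition n => P.parts) ?_ ?_ (EE_finite n)
  · intro P hP
    exact ⟨hP, P.parts_sum⟩
  · intro P _ Q _ h
    exact Nat.Partition.ext h

open Classical in
lemma many_bound (n D : ℕ) :
    ((EE_finite n).toFinset.filter (fun s => D ≤ s.toFinset.card)).card * D
      ≤ (TT_finite n).toFinset.card := by
  have := Finset.card_mul_le_card_mul (fun s u : Multiset ℕ => ∃ p, s = p ::ₘ u)
    (s := (EE_finite n).toFinset.filter (fun s => D ≤ s.toFinset.card))
    (t := (TT_finite n).toFinset) (m := D) (n := 1) ?_ ?_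
  · simpa using this
  · intro s hs
    simp only [Finset.mem_filter, Set.Finite.mem_toFinset] at hs
    obtain ⟨⟨hp, hsum⟩, hD⟩ := hs
    have hc : (s.toFinset.image (fun p => s.erase p)).card = s.toFinset.card := by
      apply Finset.card_image_of_injOn
      intro p hp q hq h
      simp only [Finset.mem_coe, Multiset.mem_toFinset] at hp hq
      simp only at h
      have h1 := congrArg Multiset.sum (Multiset.cons_erase hp)
      have h2 := congrArg Multiset.sum (Multiset.cons_erase hq)
      rw [Multiset.sum_cons] at h1 h2
      rw [h] at h1
      omega
    rw [← hc] at hD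
    refine hD.trans (Finset.card_le_card ?_)
    intro u hu
    rw [Finset.mem_image] at hu
    obtain ⟨p, hps, rfl⟩ := hu
    rw [Multiset.mem_toFinset] at hps
    simp only [Finset.bipartiteAbove, Finset.mem_filter, Set.Finite.mem_toFinset]
    refine ⟨⟨fun j hj => hp j (Multiset.mem_of_mem_erase hj), ?_⟩, p,
      (Multiset.cons_erase hps).symm⟩
    have h1 := congrArg Multiset.sum (Multiset.cons_erase hps)
    rw [Multiset.sum_cons] at h1
    omega
  · intro u hu
    rw [Finset.card_le_one]
    intro a ha b hb
    simp only [Finset.bipartiteBelow, Finset.mem_filter, Set.Finite.mem_toFinset] at ha hb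
    obtain ⟨⟨⟨_, ha⟩, _⟩, p, rfl⟩ := ha
    obtain ⟨⟨⟨_, hb⟩, _⟩, q, rfl⟩ := hb
    rw [Multiset.sum_cons] at ha hb
    have : p = q := by omega
    rw [this]

/-- multisets with at most `D` distinct elements and bounded data -/
def GG (n : ℕ) : ℕ → Finset (Multiset ℕ)
  | 0 => {0}
  | D + 1 => (GG n D ×ˢ (Finset.range (n + 1) ×ˢ Finset.range (n + 1))).image
      (fun x => x.1 + Multiset.replicate x.2.2 x.2.1)

lemma GG_card (n D : ℕ) : (GG n D).card ≤ (n + 1) ^ (2 * D) := by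
  induction D with
  | zero => simp [GG]
  | succ D ih =>
    rw [GG]
    refine Finset.card_image_le.trans ?_
    simp only [Finset.card_product, Finset.card_range]
    calc _ ≤ (n + 1) ^ (2 * D) * ((n + 1) * (n + 1)) := Nat.mul_le_mul_right _ ih
      _ = _ := by ring

lemma mem_GG (n D : ℕ) : ∀ s : Multiset ℕ, s.toFinset.card ≤ D → (∀ j ∈ s, j ≤ n) →
    s.card ≤ n → s ∈ GG n D := by
  induction D with
  | zero =>
    intro s h _ _
    simpa [GG] using h
  | succ D ih =>
    intro s h hj hc
    rw [GG, Finset.mem_image]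
    by_cases hs : s = 0
    · subst hs
      exact ⟨(0, 0, 0), by simpa using ih 0 (by simp) (by simp) (by simp), by simp⟩
    obtain ⟨a, ha⟩ := Multiset.exists_mem_of_ne_zero hs
    refine ⟨(s.filter (fun x => ¬ (x = a)), a, s.count a), ?_, ?_⟩
    · simp only [Finset.mem_product, Finset.mem_range]
      refine ⟨ih _ ?_ ?_ ?_, Nat.lt_succ_of_le (hj a ha),
        Nat.lt_succ_of_le ((Multiset.count_le_card a s).trans hc)⟩
      · have : (s.filter (fun x => ¬ (x = a))).toFinset ⊆ s.toFinset.erase a := by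
          intro x hx
          simp at hx ⊢
          tauto
        have h1 := Finset.card_le_card this
        rw [Finset.card_erase_of_mem (by simpa using ha)] at h1
        omega
      · intro j h
        exact hj j (Multiset.mem_of_mem_filter h)
      · exact (Multiset.card_le_card (Multiset.filter_le _ _)).trans hc
    · simp only
      rw [← Multiset.filter_eq' s a, add_comm]
      exact Multiset.filter_add_not _ _

lemma card_le_sum' (s : Multiset ℕ) (h : ∀ j ∈ s, j.Prime) : s.card ≤ s.sum := by
  have := Multiset.card_nsmul_le_sum (s := s) (a := 1) (fun x hx => (h x hx).one_le)
  simpa using this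

open Classical in
lemma few_bound (n D : ℕ) :
    ((EE_finite n).toFinset.filter (fun s => ¬ D ≤ s.toFinset.card)).card
      ≤ (n + 1) ^ (2 * D) := by
  refine (Finset.card_le_card ?_).trans (GG_card n D)
  intro s hs
  simp only [Finset.mem_filter, Set.Finite.mem_toFinset] at hs
  obtain ⟨⟨hp, hsum⟩, hD⟩ := hs
  refine mem_GG n D s (by omega) (fun j hj => ?_) ?_
  · rw [← hsum]; exact Multiset.le_sum_of_mem hj
  · rw [← hsum]; exact card_le_sum' s hp

lemma TT_lower (n k m C : ℕ) (hC : ∑ i ∈ Finset.range k, Nat.nth Nat.Prime i ≤ C)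
    (hm : m * C ≤ n) : (m + 1) ^ k ≤ (TT n).ncard := by
  have hpr : ∀ i, (Nat.nth Nat.Prime i).Prime := Nat.prime_nth_prime
  have hinj : Function.Injective (Nat.nth Nat.Prime) :=
    Nat.nth_injective Nat.infinite_setOfPred_prime
  have h := Set.ncard_le_ncard_of_injOn (s := (Set.univ : Set (Fin k → Fin (m + 1)))) (t := TT n)
    (fun f => ∑ i : Fin k, Multiset.replicate (f i : ℕ) (Nat.nth Nat.Prime i)) ?_ ?_ (TT_finite n)
  · simpa [Set.ncard_univ, Nat.card_eq_fintype_card] using h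
  · intro f _
    refine ⟨?_, ?_⟩
    · intro j hj
      rw [Multiset.mem_sum] at hj
      obtain ⟨i, _, hi⟩ := hj
      rw [Multiset.eq_of_mem_replicate hi]
      exact hpr _
    · rw [Multiset.sum_sum]
      simp only [Multiset.sum_replicate, smul_eq_mul]
      calc ∑ i : Fin k, (f i : ℕ) * Nat.nth Nat.Prime i
          ≤ ∑ i : Fin k, m * Nat.nth Nat.Prime i :=
            Finset.sum_le_sum fun i _ => Nat.mul_le_mul_right _ (by have := (f i).2; omega)
        _ = m * ∑ i ∈ Finset.range k, Nat.nth Nat.Prime i := by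
            rw [← Finset.mul_sum, Finset.sum_range]
        _ ≤ n := (Nat.mul_le_mul_left _ hC).trans hm
  · intro f _ g _ h
    have key : ∀ (f : Fin k → Fin (m + 1)) (i : Fin k), Multiset.count (Nat.nth Nat.Prime i)
        (∑ i : Fin k, Multiset.replicate (f i : ℕ) (Nat.nth Nat.Prime i)) = f i := by
      intro f i
      rw [Multiset.count_sum', Finset.sum_eq_single i]
      · simp
      · intro j _ hj
        rw [Multiset.count_replicate, if_neg]
        intro h
        exact hj (Fin.ext (hinj h))
      · simp
    ext i
    rw [← key f i, ← key g i]
    exact congrArg _ h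

lemma main_bound (D : ℕ) : ∃ N, ∀ n ≥ N, pP n * D ≤ 2 * M n ∧ 0 < M n := by
  classical
  obtain ⟨C, hC, hC1⟩ : ∃ C, ∑ i ∈ Finset.range (2 * D + 1), Nat.nth Nat.Prime i ≤ C ∧ 0 < C :=
    ⟨_, Nat.le_succ _, Nat.succ_pos _⟩
  refine ⟨D * C ^ (2 * D) * C, fun n hn => ?_⟩
  have hlow := TT_lower n (2 * D + 1) (n / C) C hC (Nat.div_mul_le_self n C)
  have hM := TT_le_M n
  have h1 : D * C ^ (2 * D) ≤ n / C := (Nat.le_div_iff_mul_le hC1).2 hn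
  have h2 : n + 1 ≤ C * (n / C + 1) := Nat.lt_mul_div_succ n hC1
  have h3 : (n + 1) ^ (2 * D) * D ≤ (TT n).ncard := by
    refine le_trans ?_ hlow
    calc (n + 1) ^ (2 * D) * D ≤ (C * (n / C + 1)) ^ (2 * D) * D :=
          Nat.mul_le_mul_right _ (Nat.pow_le_pow_left h2 _)
      _ = (n / C + 1) ^ (2 * D) * (D * C ^ (2 * D)) := by rw [mul_pow]; ring
      _ ≤ (n / C + 1) ^ (2 * D) * (n / C + 1) := Nat.mul_le_mul_left _ (by omega)
      _ = _ := by rw [pow_succ]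
  have h4 := many_bound n D
  have h5 := few_bound n D
  have h6 := Finset.card_filter_add_card_filter_not (s := (EE_finite n).toFinset)
    (fun s => D ≤ s.toFinset.card)
  have h7 := pP_le n
  rw [Set.ncard_eq_toFinset_card _ (EE_finite n), ← h6] at h7
  rw [← Set.ncard_eq_toFinset_card _ (TT_finite n)] at h4
  refine ⟨?_, lt_of_lt_of_le (by positivity) (hlow.trans hM)⟩
  have h8 := Nat.mul_le_mul_right D h7
  have h9 := Nat.mul_le_mul_right D h5
  rw [add_mul] at h8
  omega

/-- `p_ℙ(n) / M(n) → 0` as `n → ∞`. -/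
theorem pP_div_M_tendsto_zero :
    Filter.Tendsto (fun n : ℕ => (pP n : ℝ) / (M n : ℝ)) Filter.atTop (nhds 0) := by
  rw [Metric.tendsto_atTop]
  intro ε hε
  obtain ⟨D, hD⟩ := exists_nat_gt (2 / ε)
  obtain ⟨N, hN⟩ := main_bound D
  refine ⟨N, fun n hn => ?_⟩
  obtain ⟨h1, h2⟩ := hN n hn
  have h2' : (0 : ℝ) < M n := by exact_mod_cast h2
  have h1' : (pP n : ℝ) * D ≤ 2 * M n := by exact_mod_cast h1
  have hD0 : (0 : ℝ) < D := lt_trans (by positivity) hD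
  rw [Real.dist_eq, sub_zero, abs_of_nonneg (by positivity), div_lt_iff₀ h2']
  rw [div_lt_iff₀ hε] at hD
  have : (pP n : ℝ) * D < (ε * M n) * D := by nlinarith
  exact lt_of_mul_lt_mul_right this hD0.le
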